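/- arXiv:1912.09052 — 2 statements merged into one kernel-verified Lean document; each statement's English description precedes it below -/
import Mathlib

section
/- Let C be a countable index set and for each e ∈ C let 𝒰_e ⊆ 2^ω. If the intersection ⋂_{e∈C} 𝒰_e is not large, then there exists a finite subset C̃ ⊆ C such that ⋂_{e∈C̃} 𝒰_e is not large. -/
/-- A class `U` of subsets of `ω` is `l`-large if for every `l`-partition `f : ω → l` there
exists `i < l` with `f⁻¹(i) ∈ U`. -/
def IsLargeL (l : ℕ) (U : Set (Set ℕ)) : Prop :=
  ∀ f : ℕ → Fin l, ∃ i : Fin l, f ⁻¹' {i} ∈ U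

/-- A class `U` of subsets of `ω` is large if it is `l`-large for every `l ≥ 1`. -/
def IsLarge (U : Set (Set ℕ)) : Prop :=
  ∀ l : ℕ, 1 ≤ l → IsLargeL l U

/-- If `C` is a countable index set and `⋂_{e ∈ C} 𝒰_e` is not large, then
some finite subset `C̃ ⊆ C` already has `⋂_{e ∈ C̃} 𝒰_e` not large. -/
theorem not_large_of_finite_subset {ι : Type} [Countable ι]
    (C : Set ι) (U : ι → Set (Set ℕ)) (h : ¬ IsLarge (⋂ e ∈ C, U e)) :
    ∃ C' : Finset ι, ↑C' ⊆ C ∧ ¬ IsLarge (⋂ e ∈ C', U e) := by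
  classical
  simp only [IsLarge, IsLargeL, not_forall, not_exists, Set.mem_iInter] at h
  obtain ⟨l, hl, f, hf⟩ := h
  choose e he hfe using hf
  refine ⟨Finset.univ.image e, ?_, fun hlarge => ?_⟩
  · intro x hx
    obtain ⟨i, -, rfl⟩ := Finset.mem_image.1 (Finset.mem_coe.1 hx)
    exact he i
  · obtain ⟨i, hi⟩ := hlarge l hl f
    exact hfe i (Set.mem_iInter₂.1 hi (e i) (Finset.mem_image_of_mem e (Finset.mem_univ i)))
end

section
/- Let (C_n)_{n∈ω} be an increasing sequence of finite collections of upward closed subsets of 2^ω, and let (l_n)_{n∈ω} be a sequence of positive integers tending to infinity such that for every n, the intersection ⋂_{𝒰∈C_n} 𝒰 is l_n-large. Then the intersection ⋂_n ⋂_{𝒰∈C_n} 𝒰 is large. -/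
/-- If `(C n)` is an increasing sequence of finite collections of upward
closed classes of subsets of `ω` and `(l n)` is a sequence of positive integers tending to
infinity such that `⋂ C n` is `l n`-large for every `n`, then `⋂_n ⋂ C n` is large. -/
theorem inter_large_of_increasing_large (C : ℕ → Set (Set (Set ℕ)))
    (hfin : ∀ n, (C n).Finite) (hmono : Monotone C)
    (hup : ∀ n, ∀ U ∈ C n, ∀ A B : Set ℕ, A ∈ U → A ⊆ B → B ∈ U)
    (l : ℕ → ℕ) (hpos : ∀ n, 1 ≤ l n)
    (hlim : Filter.Tendsto l Filter.atTop Filter.atTop)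
    (hlarge : ∀ n, IsLargeL (l n) (⋂₀ C n)) :
    IsLarge (⋂ n, ⋂₀ C n) := by
  intro k hk f
  by_contra! h
  have hex : ∀ i : Fin k, ∃ n, f ⁻¹' {i} ∉ ⋂₀ C n := fun i => by
    simpa only [Set.mem_iInter, not_forall] using h i
  choose m hm using hex
  obtain ⟨N, hkN, hmN⟩ := ((hlim.eventually_ge_atTop k).and
    (Filter.eventually_ge_atTop (Finset.univ.sup m))).exists
  obtain ⟨i, hi⟩ := hlarge N fun x => Fin.castLE hkN (f x)
  -- the part found is contained in some part of `f`, being empty when `k ≤ i`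
  obtain ⟨j, hj⟩ : ∃ j : Fin k, (fun x => Fin.castLE hkN (f x)) ⁻¹' {i} ⊆ f ⁻¹' {j} := by
    have hval : ∀ x ∈ (fun x => Fin.castLE hkN (f x)) ⁻¹' {i}, (f x : ℕ) = i :=
      fun x hx => congrArg Fin.val (Set.mem_singleton_iff.mp hx)
    by_cases hik : (i : ℕ) < k
    · exact ⟨⟨i, hik⟩, fun x hx => Fin.ext (hval x hx)⟩
    · refine ⟨⟨0, hk⟩, fun x hx => absurd (f x).isLt ?_⟩
      rwa [hval x hx]
  refine hm j fun U hU => ?_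
  have hUN : U ∈ C N := hmono ((Finset.le_sup (Finset.mem_univ j)).trans hmN) hU
  exact hup N U hUN _ _ (hi U hUN) hj
end
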